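/- Let A, B ⊆ F_p be finite and nonempty, let a₀ ∈ A satisfy Σ_{a∈A}|aB ∩ a₀B| ≥ |A||B|²/|AB|, and for each j ≤ ⌈log₂|B|⌉ let A_j = {a ∈ A : 2^{j−1} < |aB ∩ a₀B| ≤ 2^j}. If |A_j| ≤ p^{1/2}, then 16^j|A_j|³ ≤ C·|A+B|^{10}/(|A|³|B|) for an absolute constant C; if instead (A_j−A_j)/(A_j−A_j) = F_p, then 16^j·min{|A_j|², p} ≤ C·|A+B|⁸/|A|³. -/

import Mathlib

open Finset Pointwise

/-- The set of ratios `(a - b) / (c - d)` with `a, b, c, d ∈ A` and `c ≠ d`. -/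
def ratioSet {p : ℕ} [Fact p.Prime] (A : Finset (ZMod p)) : Set (ZMod p) :=
  {x | ∃ a ∈ A, ∃ b ∈ A, ∃ c ∈ A, ∃ d ∈ A, c ≠ d ∧ x = (a - b) / (c - d)}

/-!
Put `K = #(A + B)` and let `N` be a lower bound for `#(a • B ∩ a₀ • B)` over `a ∈ T`. Ruzsa's
triangle inequality through `a • B ∩ a₀ • B` gives `#(a₀ • A ± a • A) ≤ K² / N`. For a ratio
`ξ = (a - b) / (c - d)` of elements of `T`, a dilate of `A + ξ • A` lies in
`a • A - b • A + c • A - d • A`, so Plünnecke's inequality yields `#(A + ξ • A) ≪ K⁸ / (N⁴ #A³)`.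

If every element of the field is a ratio, averaging the additive energy of `A` and `ξ • A` over
`ξ ≠ 0` produces a ratio with `#(A + ξ • A) ≫ min(#A², p)`. Otherwise some ratio `ξ` has `ξ + 1`
not a ratio. Then `#(U + (ξ + 1) • T) = #U #T` for every `U ⊆ T`, while
`U + (ξ + 1) • T ⊆ U + T + ξ • T`, and Plünnecke's inequality for two different summands, applied
to a suitable `U`, gives `#T³ ≪ #(T + T) #(T + ξ • T) ≤ #(A + A) #(A + ξ • A)`.
-/

section Plunnecke

theorem exists_subset_forall_card_add_mul_card_le {G : Type*} [Add G] [DecidableEq G]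
    {X : Finset G} (hX : X.Nonempty) (Y : Finset G) :
    ∃ U ⊆ X, U.Nonempty ∧ ∀ V ⊆ X, #(U + Y) * #V ≤ #(V + Y) * #U := by
  obtain ⟨U, hU, hmin⟩ := exists_min_image (X.powerset.erase ∅)
    (fun U ↦ (#(U + Y) / #U : ℚ≥0)) ⟨X, by simp [hX.ne_empty]⟩
  rw [mem_erase, mem_powerset, ← nonempty_iff_ne_empty] at hU
  refine ⟨U, hU.2, hU.1, fun V hV ↦ ?_⟩
  obtain rfl | hV0 := V.eq_empty_or_nonempty
  · simp
  have h := hmin V (by simp [hV0.ne_empty, hV])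
  rw [div_le_div_iff₀ (by exact_mod_cast hU.1.card_pos) (by exact_mod_cast hV0.card_pos)] at h
  exact_mod_cast h

/-- Copies of `Y` and `Z` spread along the two axes `H` and `K` of `H × K`. Adding `X × {0}` costs
only `#(X + Y) * #H + #(X + Z) * #K`, while adding this set to itself already covers
`(Y + Z) × H × K`; this lets the Plünnecke inequality for repeated addition of one set handle the
addition of two different ones. -/
def transversalUnion {G : Type*} [DecidableEq G] (Y Z : Finset G) (H K : Type*)
    [Zero H] [Fintype H] [DecidableEq H] [Zero K] [Fintype K] [DecidableEq K] :
    Finset (G × H × K) :=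
  Y ×ˢ univ ×ˢ 0 ∪ Z ×ˢ 0 ×ˢ univ

section

variable {G H K : Type*} [DecidableEq G] [AddZeroClass H] [Fintype H] [DecidableEq H]
  [AddZeroClass K] [Fintype K] [DecidableEq K]

theorem card_product_zero_add_transversalUnion_le [Add G] (X Y Z : Finset G) :
    #(X ×ˢ 0 + transversalUnion Y Z H K) ≤
      #(X + Y) * Fintype.card H + #(X + Z) * Fintype.card K := by
  rw [transversalUnion, add_union, ← zero_product_zero]
  refine (card_union_le _ _).trans_eq ?_
  simp only [product_add_product_comm, card_product, zero_add, card_univ,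
    card_zero, mul_one, one_mul]

theorem card_add_add_mul_card_le [AddCommSemigroup G] (U Y Z : Finset G) :
    #(U + Y + Z) * (Fintype.card H * Fintype.card K) ≤
      #(transversalUnion Y Z H K + U ×ˢ 0 + transversalUnion Y Z H K) := by
  have hsub : (Y ×ˢ univ ×ˢ 0 + U ×ˢ 0 + Z ×ˢ 0 ×ˢ univ : Finset (G × H × K)) ⊆
      transversalUnion Y Z H K + U ×ˢ 0 + transversalUnion Y Z H K := by
    unfold transversalUnion
    gcongr
    exacts [subset_union_left, subset_union_right]
  refine le_trans (le_of_eq ?_) (card_le_card hsub)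
  simp only [← zero_product_zero, product_add_product_comm, card_product, zero_add, add_zero,
    card_univ, add_comm Y]

end

variable {G : Type*} [AddCommGroup G] [DecidableEq G]

theorem exists_subset_card_add_add_mul_sq_le {X : Finset G} (hX : X.Nonempty) (Y Z : Finset G) :
    ∃ U ⊆ X, U.Nonempty ∧ #(U + Y + Z) * #X ^ 2 ≤ 4 * (#(X + Y) * #(X + Z)) * #U := by
  obtain rfl | hY := Y.eq_empty_or_nonempty
  · exact ⟨X, subset_rfl, hX, by simp⟩
  obtain rfl | hZ := Z.eq_empty_or_nonempty
  · exact ⟨X, subset_rfl, hX, by simp⟩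
  set n := #(X + Y)
  set m := #(X + Z)
  have : NeZero n := ⟨(hX.add hY).card_pos.ne'⟩
  have : NeZero m := ⟨(hX.add hZ).card_pos.ne'⟩
  -- The orders `m` and `n` make the two terms bounding `#(X ×ˢ 0 + T)` equal.
  let T := transversalUnion Y Z (ZMod m) (ZMod n)
  obtain ⟨W, hWX, hW, hmin⟩ :=
    exists_subset_forall_card_add_mul_card_le (hX.product zero_nonempty) T
  obtain ⟨U, hUX, rfl⟩ : ∃ U ⊆ X, W = U ×ˢ 0 := by
    simp_rw [← singleton_zero, product_singleton] at hWX ⊢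
    exact subset_map_iff.1 hWX
  have hU : U.Nonempty := hW.fst
  refine ⟨U, hUX, hU, ?_⟩
  set q := #(U ×ˢ 0 + T)
  have hq : q * #X ≤ 2 * (m * n) * #U := by
    have hcard := card_product_zero_add_transversalUnion_le (H := ZMod m) (K := ZMod n) X Y Z
    rw [ZMod.card, ZMod.card] at hcard
    calc q * #X ≤ #(X ×ˢ 0 + T) * #U := by simpa using hmin _ subset_rfl
      _ ≤ (n * m + m * n) * #U := by gcongr
      _ = 2 * (m * n) * #U := by ring
  have hS : #(U + Y + Z) * (m * n) * #U ≤ q * q := by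
    have hpet := pluennecke_petridis_inequality_add T fun V hV ↦ hmin V (hV.trans hWX)
    rw [add_comm T, card_product, card_zero, mul_one] at hpet
    refine le_trans ?_ hpet
    gcongr
    simpa [add_comm] using card_add_add_mul_card_le (H := ZMod m) (K := ZMod n) U Y Z
  have hpos : 0 < m * n * #U := by have := hU.card_pos; positivity
  refine Nat.le_of_mul_le_mul_right ?_ hpos
  calc #(U + Y + Z) * #X ^ 2 * (m * n * #U) = #(U + Y + Z) * (m * n) * #U * #X ^ 2 := by ring
    _ ≤ q * q * #X ^ 2 := by gcongr
    _ = (q * #X) ^ 2 := by ring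
    _ ≤ (2 * (m * n) * #U) ^ 2 := by gcongr
    _ = 4 * (n * m) * #U * (m * n * #U) := by ring

theorem card_sum_mul_pow_le {ι : Type*} {X : Finset G} (hX : X.Nonempty) {Y : ι → Finset G}
    {s : Finset ι} {M N : ℕ} (hY : ∀ i ∈ s, #(X + Y i) * N ≤ M) :
    #(∑ i ∈ s, Y i) * (N * #X) ^ #s ≤ (#s * M) ^ #s * #X := by
  have hsub : ∑ i ∈ s, Y i ⊆ #s • s.biUnion Y :=
    sum_le_card_nsmul _ _ _ fun i hi ↦ subset_biUnion_of_mem Y hi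
  have hunion : X + s.biUnion Y = s.biUnion fun i ↦ X + Y i := by
    ext; simp only [mem_add, mem_biUnion]; grind
  have hcard : #(X + s.biUnion Y) * N ≤ #s * M :=
    calc #(X + s.biUnion Y) * N ≤ (∑ i ∈ s, #(X + Y i)) * N := by
          rw [hunion]; gcongr; exact card_biUnion_le
      _ ≤ #s * M := by rw [sum_mul]; exact sum_le_card_nsmul _ _ _ hY
  have hplun : #(#s • s.biUnion Y) * #X ^ #s ≤ #(X + s.biUnion Y) ^ #s * #X := by
    have : (0 : ℚ≥0) < #X := by exact_mod_cast hX.card_pos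
    have h := pluennecke_ruzsa_inequality_nsmul_add hX (s.biUnion Y) #s
    rw [div_pow, div_mul_eq_mul_div, le_div_iff₀ (by positivity)] at h
    exact_mod_cast h
  calc #(∑ i ∈ s, Y i) * (N * #X) ^ #s ≤ #(#s • s.biUnion Y) * (N * #X) ^ #s := by gcongr
    _ = #(#s • s.biUnion Y) * #X ^ #s * N ^ #s := by ring
    _ ≤ #(X + s.biUnion Y) ^ #s * #X * N ^ #s := by gcongr
    _ = (#(X + s.biUnion Y) * N) ^ #s * #X := by ring
    _ ≤ (#s * M) ^ #s * #X := by gcongr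

end Plunnecke

section LargeDilateSum

theorem addEnergy_smul_right {M V : Type*} [Group M] [Add V] [MulAction M V]
    [DecidableEq V] (A B : Finset V) (u : M) :
    addEnergy A (u • B) =
      #{x ∈ (A ×ˢ A) ×ˢ (B ×ˢ B) | x.1.1 + u • x.2.1 = x.1.2 + u • x.2.2} :=
  (card_equiv ((Equiv.refl _).prodCongr (MulAction.toPerm u)) (by simp)).symm

variable {F V : Type*} [DivisionRing F] [Fintype F] [AddCommGroup V] [Module F V] [DecidableEq V]

theorem card_filter_add_smul_eq_le_one [DecidableEq F] {a b c d : V} (h : a ≠ b ∨ c ≠ d) :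
    #{u : Fˣ | a + u • c = b + u • d} ≤ 1 := by
  rw [card_le_one]
  intro u hu v hv
  simp only [mem_filter, mem_univ, true_and] at hu hv
  have hcd : c ≠ d := by
    rintro rfl
    simp_all
  have hsub : (u : F) • (c - d) = (v : F) • (c - d) := by
    simp only [smul_sub, ← Units.smul_def]
    grind
  exact Units.ext (smul_left_injective F (sub_ne_zero.2 hcd) hsub)

theorem sum_addEnergy_smul_le [DecidableEq F] (A B : Finset V) :
    ∑ u : Fˣ, addEnergy A (u • B) ≤ #A * #B * (#A * #B + Fintype.card Fˣ) := by
  let D := A.diag ×ˢ B.diag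
  simp only [addEnergy_smul_right]
  calc ∑ u : Fˣ, #{x ∈ (A ×ˢ A) ×ˢ B ×ˢ B | x.1.1 + u • x.2.1 = x.1.2 + u • x.2.2}
      = ∑ x ∈ (A ×ˢ A) ×ˢ B ×ˢ B, #{u : Fˣ | x.1.1 + u • x.2.1 = x.1.2 + u • x.2.2} :=
        sum_card_bipartiteAbove_eq_sum_card_bipartiteBelow _
    _ ≤ ∑ x ∈ (A ×ˢ A) ×ˢ B ×ˢ B, (1 + if x ∈ D then Fintype.card Fˣ else 0) := by
        refine sum_le_sum fun x hx ↦ ?_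
        split_ifs with h
        · exact (card_le_univ _).trans (Nat.le_add_left _ _)
        · refine card_filter_add_smul_eq_le_one ?_
          simp only [D, mem_product, mem_diag] at hx h
          tauto
    _ = #A * #B * (#A * #B + Fintype.card Fˣ) := by
        have hD : D ⊆ (A ×ˢ A) ×ˢ B ×ˢ B := by
          intro x; simp only [D, mem_product, mem_diag]; grind
        rw [sum_add_distrib, sum_ite_mem, inter_eq_right.2 hD]
        simp only [D, sum_const, card_product, diag_card, smul_eq_mul]
        ring

theorem exists_min_card_mul_card_le_card_add_smul (A B : Finset V) :
    ∃ u : Fˣ, min (#A * #B) (Fintype.card F) ≤ 2 * #(A + u • B) := by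
  classical
  set r := Fintype.card Fˣ with hr
  set P := #A * #B
  have hF : Fintype.card F = r + 1 := by
    rw [hr, Fintype.card_units, Nat.sub_add_cancel Fintype.card_pos]
  obtain ⟨u, -, hu⟩ : ∃ u ∈ univ, r * addEnergy A (u • B) ≤ P * (P + r) := by
    refine exists_le_of_sum_le (univ_nonempty (α := Fˣ)) ?_
    rw [← mul_sum, sum_const, card_univ, smul_eq_mul]
    gcongr
    exact sum_addEnergy_smul_le A B
  refine ⟨u, ?_⟩
  set S := #(A + u • B)
  have hCS : P ^ 2 ≤ S * addEnergy A (u • B) := by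
    simpa [P, mul_pow] using le_card_add_mul_addEnergy A (u • B)
  by_contra! hlt
  obtain ⟨hP, hq⟩ := lt_min_iff.1 hlt
  have : 0 < r := Fintype.card_pos
  have hle : r * P ≤ S * (P + r) := by
    refine Nat.le_of_mul_le_mul_left ?_ (show 0 < P by omega)
    calc P * (r * P) = r * P ^ 2 := by ring
      _ ≤ r * (S * addEnergy A (u • B)) := by gcongr
      _ = S * (r * addEnergy A (u • B)) := by ring
      _ ≤ S * (P * (P + r)) := by gcongr
      _ = P * (S * (P + r)) := by ring
  have hP' : S * P * 2 ≤ r * P := by rw [mul_right_comm, mul_comm S]; gcongr; omega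
  have hr' : S * r * 2 < r * P := by rw [mul_right_comm, mul_comm S, mul_comm r]; gcongr
  linarith

end LargeDilateSum

section Dilates

theorem add_smul_finset_subset {R M : Type*} [Semiring R] [AddCommMonoid M] [Module R M]
    [DecidableEq M] (a b : R) (s : Finset M) : (a + b) • s ⊆ a • s + b • s := by
  exact_mod_cast Set.add_smul_subset a b (s : Set M)

theorem card_smul_add_le_of_subset_smul {M G : Type*} [AddZeroClass G] [DecidableEq G]
    [DistribSMul M G] {A B S : Finset G} {a : M} (hS : S ⊆ a • B) : #(a • A + S) ≤ #(A + B) :=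
  calc #(a • A + S) ≤ #(a • A + a • B) := by gcongr
    _ = #(a • (A + B)) := by rw [smul_add]
    _ ≤ #(A + B) := card_smul_finset_le

variable {M G : Type*} [AddCommGroup G] [DecidableEq G] [DistribSMul M G]

theorem card_smul_add_smul_mul_card_inter_le (A B : Finset G) (a b : M) :
    #(a • A + b • A) * #(a • B ∩ b • B) ≤ #(A + B) ^ 2 := by
  refine (ruzsa_triangle_inequality_add_add_add _ _ _).trans ?_
  rw [sq, add_comm _ (b • A)]
  exact Nat.mul_le_mul (card_smul_add_le_of_subset_smul inter_subset_left)
    (card_smul_add_le_of_subset_smul inter_subset_right)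

theorem card_smul_sub_smul_mul_card_inter_le (A B : Finset G) (a b : M) :
    #(a • A - b • A) * #(a • B ∩ b • B) ≤ #(A + B) ^ 2 := by
  refine (ruzsa_triangle_inequality_sub_add_add _ _ _).trans ?_
  rw [sq]
  exact Nat.mul_le_mul (card_smul_add_le_of_subset_smul inter_subset_left)
    (card_smul_add_le_of_subset_smul inter_subset_right)

end Dilates

section RatioSet

theorem exists_mem_add_one_notMem {n : ℕ} [NeZero n] {S : Set (ZMod n)} (hzero : 0 ∈ S)
    (hS : S ≠ Set.univ) : ∃ x ∈ S, x + 1 ∉ S := by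
  by_contra! hsucc
  refine hS (Set.eq_univ_of_forall fun x ↦ ?_)
  have hnat (k : ℕ) : (k : ZMod n) ∈ S := by
    induction k with
    | zero => simpa using hzero
    | succ k ih => exact_mod_cast hsucc _ ih
  simpa using hnat x.val

variable {p : ℕ} [Fact p.Prime] {A U V T : Finset (ZMod p)} {ξ : ZMod p}

theorem zero_mem_ratioSet (hA : A.Nontrivial) : 0 ∈ ratioSet A := by
  obtain ⟨a, ha, b, hb, hab⟩ := hA
  exact ⟨a, ha, a, ha, a, ha, b, hb, hab, by simp⟩

theorem card_add_smul_of_notMem_ratioSet (hξ : ξ ∉ ratioSet A) (hU : U ⊆ A) (hV : V ⊆ A) :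
    #(U + ξ • V) = #U * #V := by
  have himage : U + ξ • V = image₂ (fun x y ↦ x + ξ * y) U V := image₂_image_right _ _
  rw [himage, card_image₂_iff]
  rintro ⟨a, c⟩ ⟨ha, hc⟩ ⟨b, d⟩ ⟨hb, hd⟩ heq
  have hcd : c = d := by
    by_contra hcd
    refine hξ ⟨b, hU hb, a, hU ha, c, hV hc, d, hV hd, hcd, ?_⟩
    rw [eq_div_iff (sub_ne_zero.2 hcd)]
    linear_combination heq
  subst hcd
  exact Prod.ext (add_right_cancel heq) rfl

theorem card_pow_three_le_of_add_one_notMem_ratioSet (hξ : ξ + 1 ∉ ratioSet T) :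
    #T ^ 3 ≤ 4 * (#(T + T) * #(T + ξ • T)) := by
  obtain rfl | hT := T.eq_empty_or_nonempty
  · simp
  obtain ⟨U, hUT, hU, hcard⟩ := exists_subset_card_add_add_mul_sq_le hT T (ξ • T)
  have hsub : U + (ξ + 1) • T ⊆ U + T + ξ • T := by
    rw [add_assoc, add_comm ξ]
    gcongr
    simpa using add_smul_finset_subset 1 ξ T
  refine Nat.le_of_mul_le_mul_right ?_ hU.card_pos
  calc #T ^ 3 * #U = #U * #T * #T ^ 2 := by ring
    _ = #(U + (ξ + 1) • T) * #T ^ 2 := by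
      rw [card_add_smul_of_notMem_ratioSet hξ hUT subset_rfl]
    _ ≤ #(U + T + ξ • T) * #T ^ 2 := by gcongr
    _ ≤ 4 * (#(T + T) * #(T + ξ • T)) * #U := hcard

end RatioSet

section PopularDilates

variable {F : Type*} [DivisionRing F] [DecidableEq F] {A B T : Finset F} {a₀ : F} {N : ℕ}

theorem card_sub_smul_add_sub_smul_mul_le (ha₀ : a₀ ≠ 0)
    (hN : ∀ a ∈ T, N ≤ #(a • B ∩ a₀ • B)) {a b c d : F}
    (ha : a ∈ T) (hb : b ∈ T) (hc : c ∈ T) (hd : d ∈ T) :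
    #((a - b) • A + (c - d) • A) * (N ^ 4 * #A ^ 3) ≤ 256 * #(A + B) ^ 8 := by
  obtain rfl | hA := A.eq_empty_or_nonempty
  · simp
  have hpos {t : F} (ht : t ∈ T) : #(a₀ • A + t • A) * N ≤ #(A + B) ^ 2 := by
    rw [add_comm]
    exact (Nat.mul_le_mul_left _ (hN t ht)).trans (card_smul_add_smul_mul_card_inter_le A B t a₀)
  have hneg {t : F} (ht : t ∈ T) : #(a₀ • A + -t • A) * N ≤ #(A + B) ^ 2 := by
    rw [neg_smul_finset, ← sub_eq_add_neg]
    refine (Nat.mul_le_mul_left _ (hN t ht)).trans ?_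
    rw [inter_comm]
    exact card_smul_sub_smul_mul_card_inter_le A B a₀ t
  let Y : Fin 4 → Finset F := ![a • A, -b • A, c • A, -d • A]
  have hsub : (a - b) • A + (c - d) • A ⊆ ∑ i, Y i := by
    rw [show ∑ i, Y i = a • A + -b • A + c • A + -d • A from Fin.sum_univ_four Y, add_assoc,
      sub_eq_add_neg, sub_eq_add_neg]
    exact add_subset_add (add_smul_finset_subset a (-b) A) (add_smul_finset_subset c (-d) A)
  have hY : ∀ i ∈ univ, #(a₀ • A + Y i) * N ≤ #(A + B) ^ 2 := by
    intro i _
    fin_cases i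
    exacts [hpos ha, hneg hb, hpos hc, hneg hd]
  have hsum : #(∑ i, Y i) * (N * #A) ^ 4 ≤ (4 * #(A + B) ^ 2) ^ 4 * #A := by
    simpa only [card_fin, card_smul_finset₀ ha₀ A] using
      card_sum_mul_pow_le (hA.smul_finset (a := a₀)) hY
  refine Nat.le_of_mul_le_mul_right ?_ hA.card_pos
  calc #((a - b) • A + (c - d) • A) * (N ^ 4 * #A ^ 3) * #A
      = #((a - b) • A + (c - d) • A) * (N * #A) ^ 4 := by ring
    _ ≤ #(∑ i, Y i) * (N * #A) ^ 4 := by gcongr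
    _ ≤ (4 * #(A + B) ^ 2) ^ 4 * #A := hsum
    _ = 256 * #(A + B) ^ 8 * #A := by ring

end PopularDilates

section PrimeField

variable {p : ℕ} [Fact p.Prime] {A B T : Finset (ZMod p)} {a₀ : ZMod p} {N : ℕ}

theorem card_add_smul_mul_le_of_mem_ratioSet (ha₀ : a₀ ≠ 0)
    (hN : ∀ a ∈ T, N ≤ #(a • B ∩ a₀ • B)) {ξ : ZMod p} (hξ : ξ ∈ ratioSet T) :
    #(A + ξ • A) * (N ^ 4 * #A ^ 3) ≤ 256 * #(A + B) ^ 8 := by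
  obtain ⟨a, ha, b, hb, c, hc, d, hd, hcd, rfl⟩ := hξ
  have hcd0 : c - d ≠ 0 := sub_ne_zero.2 hcd
  have hdilate : (c - d) • (A + ((a - b) / (c - d)) • A) = (c - d) • A + (a - b) • A := by
    rw [smul_add, smul_smul, mul_div_cancel₀ _ hcd0]
  rw [← card_smul_finset₀ hcd0, hdilate]
  exact card_sub_smul_add_sub_smul_mul_le ha₀ hN hc hd ha hb

theorem min_sq_card_mul_le_of_ratioSet_eq_univ (ha₀ : a₀ ≠ 0)
    (hN : ∀ a ∈ T, N ≤ #(a • B ∩ a₀ • B)) (hT : ratioSet T = Set.univ) :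
    min (#A ^ 2) p * (N ^ 4 * #A ^ 3) ≤ 512 * #(A + B) ^ 8 := by
  obtain ⟨u, hu⟩ := exists_min_card_mul_card_le_card_add_smul (F := ZMod p) A A
  rw [ZMod.card, ← sq] at hu
  calc min (#A ^ 2) p * (N ^ 4 * #A ^ 3) ≤ 2 * #(A + (u : ZMod p) • A) * (N ^ 4 * #A ^ 3) := by
        gcongr; exact hu
    _ = 2 * (#(A + (u : ZMod p) • A) * (N ^ 4 * #A ^ 3)) := by ring
    _ ≤ 2 * (256 * #(A + B) ^ 8) :=
        Nat.mul_le_mul_left _ (card_add_smul_mul_le_of_mem_ratioSet ha₀ hN (hT ▸ Set.mem_univ _))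
    _ = 512 * #(A + B) ^ 8 := by ring

theorem card_pow_three_mul_le_of_ratioSet_ne_univ (ha₀ : a₀ ≠ 0) (hTA : T ⊆ A)
    (hN : ∀ a ∈ T, N ≤ #(a • B ∩ a₀ • B)) (hT : T.Nontrivial) (hR : ratioSet T ≠ Set.univ) :
    #T ^ 3 * (N ^ 4 * #A ^ 3 * #B) ≤ 1024 * #(A + B) ^ 10 := by
  obtain ⟨ξ, hξ, hξ'⟩ := exists_mem_add_one_notMem (zero_mem_ratioSet hT) hR
  have hsum : #(A + A) * #B ≤ #(A + B) ^ 2 := by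
    simpa [sq, add_comm B] using ruzsa_triangle_inequality_add_add_add A B A
  calc #T ^ 3 * (N ^ 4 * #A ^ 3 * #B)
      ≤ 4 * (#(T + T) * #(T + ξ • T)) * (N ^ 4 * #A ^ 3 * #B) := by
        gcongr; exact card_pow_three_le_of_add_one_notMem_ratioSet hξ'
    _ ≤ 4 * (#(A + A) * #(A + ξ • A)) * (N ^ 4 * #A ^ 3 * #B) := by gcongr
    _ = 4 * (#(A + A) * #B) * (#(A + ξ • A) * (N ^ 4 * #A ^ 3)) := by ring
    _ ≤ 4 * #(A + B) ^ 2 * (256 * #(A + B) ^ 8) :=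
        Nat.mul_le_mul (Nat.mul_le_mul_left _ hsum)
          (card_add_smul_mul_le_of_mem_ratioSet ha₀ hN hξ)
    _ = 1024 * #(A + B) ^ 10 := by ring

theorem card_pow_three_mul_le_of_card_le_one (hTA : T ⊆ A)
    (hN : ∀ a ∈ T, N ≤ #(a • B ∩ a₀ • B)) (hT : #T ≤ 1) :
    #T ^ 3 * (N ^ 4 * #A ^ 3 * #B) ≤ #(A + B) ^ 8 := by
  obtain rfl | ⟨a, ha⟩ := T.eq_empty_or_nonempty
  · simp
  obtain rfl | hB := B.eq_empty_or_nonempty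
  · simp
  have hAK : #A ≤ #(A + B) := card_le_card_add_right hB
  have hBK : #B ≤ #(A + B) := card_le_card_add_left ⟨a, hTA ha⟩
  have hNB : N ≤ #B := (hN a ha).trans ((card_le_card inter_subset_left).trans card_smul_finset_le)
  calc #T ^ 3 * (N ^ 4 * #A ^ 3 * #B)
      ≤ 1 ^ 3 * (#(A + B) ^ 4 * #(A + B) ^ 3 * #(A + B)) := by
        gcongr; exact hNB.trans hBK
    _ = #(A + B) ^ 8 := by ring

theorem card_pow_three_mul_le (ha₀ : a₀ ≠ 0) (hTA : T ⊆ A)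
    (hN : ∀ a ∈ T, N ≤ #(a • B ∩ a₀ • B)) (hTp : #T ^ 2 ≤ p) :
    #T ^ 3 * (N ^ 4 * #A ^ 3 * #B) ≤ 1024 * #(A + B) ^ 10 := by
  obtain rfl | hT0 := T.eq_empty_or_nonempty
  · simp
  obtain rfl | hB := B.eq_empty_or_nonempty
  · simp
  have hA : A.Nonempty := hT0.mono hTA
  obtain hT | hT := le_or_gt #T 1
  · calc #T ^ 3 * (N ^ 4 * #A ^ 3 * #B) ≤ #(A + B) ^ 8 :=
          card_pow_three_mul_le_of_card_le_one hTA hN hT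
      _ ≤ #(A + B) ^ 10 := Nat.pow_le_pow_right (hA.add hB).card_pos (by norm_num)
      _ ≤ 1024 * #(A + B) ^ 10 := Nat.le_mul_of_pos_left _ (by norm_num)
  obtain hR | hR := ne_or_eq (ratioSet T) Set.univ
  · exact card_pow_three_mul_le_of_ratioSet_ne_univ ha₀ hTA hN
      (one_lt_card_iff_nontrivial.1 hT) hR
  have hmin : #T ^ 2 ≤ min (#A ^ 2) p := le_min (by gcongr) hTp
  have hTB : #T * #B ≤ #(A + B) ^ 2 := by
    rw [sq]
    exact Nat.mul_le_mul ((card_le_card hTA).trans (card_le_card_add_right hB))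
      (card_le_card_add_left hA)
  calc #T ^ 3 * (N ^ 4 * #A ^ 3 * #B) = #T ^ 2 * (N ^ 4 * #A ^ 3) * (#T * #B) := by ring
    _ ≤ min (#A ^ 2) p * (N ^ 4 * #A ^ 3) * #(A + B) ^ 2 := by gcongr
    _ ≤ 512 * #(A + B) ^ 8 * #(A + B) ^ 2 :=
        Nat.mul_le_mul_right _ (min_sq_card_mul_le_of_ratioSet_eq_univ ha₀ hN hR)
    _ = 512 * #(A + B) ^ 10 := by ring
    _ ≤ 1024 * #(A + B) ^ 10 := by gcongr; norm_num

theorem dyadic_piece_bounds_general {j : ℕ} (hA : A.Nonempty) (hB : B.Nonempty) (hj : 1 ≤ j)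
    (hTA : T ⊆ A) (hT : ∀ a ∈ T, 2 ^ (j - 1) < #(a • B ∩ a₀ • B)) :
    ((#T : ℝ) ≤ √p →
      (16 : ℝ) ^ j * (#T : ℝ) ^ 3 ≤ 16384 * (#(A + B) : ℝ) ^ 10 / ((#A : ℝ) ^ 3 * (#B : ℝ))) ∧
    (ratioSet T = Set.univ →
      (16 : ℝ) ^ j * min ((#T : ℝ) ^ 2) (p : ℝ) ≤
        16384 * (#(A + B) : ℝ) ^ 8 / (#A : ℝ) ^ 3) := by
  obtain rfl | ⟨a, ha⟩ := T.eq_empty_or_nonempty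
  · exact ⟨fun _ ↦ by simpa using by positivity, fun _ ↦ by simpa using by positivity⟩
  have ha₀ : a₀ ≠ 0 := by
    rintro rfl
    have hlt := (hT a ha).trans_le (card_le_card inter_subset_right)
    simp [zero_smul_finset hB] at hlt
  have hN : ∀ a ∈ T, 2 ^ (j - 1) ≤ #(a • B ∩ a₀ • B) := fun a ha ↦ (hT a ha).le
  have hpow : 16 ^ j = 16 * (2 ^ (j - 1)) ^ 4 := by
    rw [← pow_sub_mul_pow 16 hj, ← pow_mul, mul_comm (j - 1), pow_mul]; ring
  have : (0 : ℝ) < #A := by exact_mod_cast hA.card_pos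
  have : (0 : ℝ) < #B := by exact_mod_cast hB.card_pos
  refine ⟨fun hTp ↦ ?_, fun hR ↦ ?_⟩ <;> rw [le_div_iff₀ (by positivity)] <;> norm_cast
  · rw [Real.le_sqrt (by positivity) (by positivity)] at hTp
    have hbound := card_pow_three_mul_le ha₀ hTA hN (by exact_mod_cast hTp)
    calc 16 ^ j * #T ^ 3 * (#A ^ 3 * #B)
        = 16 * (#T ^ 3 * ((2 ^ (j - 1)) ^ 4 * #A ^ 3 * #B)) := by rw [hpow]; ring
      _ ≤ 16384 * #(A + B) ^ 10 := by omega
  · have hbound := min_sq_card_mul_le_of_ratioSet_eq_univ (A := A) ha₀ hN hR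
    calc 16 ^ j * min (#T ^ 2) p * #A ^ 3
        = 16 * (min (#T ^ 2) p * ((2 ^ (j - 1)) ^ 4 * #A ^ 3)) := by rw [hpow]; ring
      _ ≤ 16 * (min (#A ^ 2) p * ((2 ^ (j - 1)) ^ 4 * #A ^ 3)) := by gcongr
      _ ≤ 16384 * #(A + B) ^ 8 := by omega

end PrimeField

theorem dyadic_piece_bounds :
    ∃ C : ℝ, 0 < C ∧ ∀ (p : ℕ) [Fact p.Prime], ∀ A B : Finset (ZMod p),
      A.Nonempty → B.Nonempty → ∀ a₀ ∈ A,
      (A.card : ℝ) * (B.card : ℝ) ^ 2 / ((A * B).card : ℝ) ≤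
        (∑ a ∈ A, ((B.image (a * ·)) ∩ (B.image (a₀ * ·))).card : ℝ) →
      ∀ j : ℕ, 1 ≤ j → j ≤ Nat.clog 2 B.card →
      ∀ Aj : Finset (ZMod p),
        Aj = (A.filter fun a =>
          2 ^ (j - 1) < ((B.image (a * ·)) ∩ (B.image (a₀ * ·))).card ∧
          ((B.image (a * ·)) ∩ (B.image (a₀ * ·))).card ≤ 2 ^ j) →
        ((Aj.card : ℝ) ≤ Real.sqrt p →
          (16 : ℝ) ^ j * (Aj.card : ℝ) ^ 3 ≤
            C * ((A + B).card : ℝ) ^ 10 / ((A.card : ℝ) ^ 3 * (B.card : ℝ))) ∧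
        (ratioSet Aj = Set.univ →
          (16 : ℝ) ^ j * min ((Aj.card : ℝ) ^ 2) (p : ℝ) ≤
            C * ((A + B).card : ℝ) ^ 8 / (A.card : ℝ) ^ 3) :=
  ⟨16384, by norm_num, fun _ _ _ _ hA hB _ _ _ _ hj _ _ hAj ↦ hAj ▸
    dyadic_piece_bounds_general hA hB hj (filter_subset _ _) fun _ ha ↦ (mem_filter.1 ha).2.1⟩
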